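/- Under the deep-GP marginalisation setup with the additional definitions below, for every l ∈ {1, …, L} the block matrix Γ^l := [[Σ̂^l, Σ̂_{nM}^{(l)}], [(Σ̂_{nM}^{(l)})ᵀ, Σ̂_M^{(l)}]] is symmetric positive definite, and for all f^1, …, f^L and all f_M^{l+1} ∈ ℝ^{m_{l+1}}, …, f_M^L ∈ ℝ^{m_L}: ∫_{ℝ^{m_1+…+m_l}} N(f_M; μ_M, S_M) · ∏_{l'=1}^{l} N(f^{l'}; A^{l'}(f^{l'−1}) f_M^{l'}, B^{l'}(f^{l'−1})) df_M^1 ⋯ df_M^l = [∏_{l'=1}^{l−1} N(f^{l'}; μ̂^{l'}, Σ̂^{l'})] · N((f^l, f_M^{l+1}, …, f_M^L); (μ̂^l, μ̂_M^{(l)}), Γ^l). (Lemma 1 of the paper: the inducing outputs of layers 1, …, l can be integrated out, yielding the stated product of Gaussian conditionals times an explicit joint Gaussian in (f^l, f_M^{l+1:L}).) -/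

import Mathlib

open Matrix MeasureTheory Real

noncomputable section

/-- The multivariate Gaussian density
`N(x; μ, S) = (2π)^{−d/2} (det S)^{−1/2} exp(−(1/2)(x−μ)ᵀ S⁻¹ (x−μ))`. -/
def gaussPDF {ι : Type*} [Fintype ι] [DecidableEq ι]
    (μ : ι → ℝ) (S : Matrix ι ι ℝ) (x : ι → ℝ) : ℝ :=
  (2 * Real.pi) ^ (-(Fintype.card ι : ℝ) / 2) * S.det ^ (-(1 : ℝ) / 2) *
    Real.exp (-(1 / 2 : ℝ) * ((x - μ) ⬝ᵥ (S⁻¹ *ᵥ (x - μ))))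

variable {L : ℕ}

/-- Indices lying in layers strictly before layer `l`. -/
abbrev Below (d : Fin L → ℕ) (l : Fin L) : Type :=
  {p : (i : Fin L) × Fin (d i) // p.1 < l}

/-- The block submatrix `S^{1:l−1,1:l−1}`. -/
def prevBlock {d : Fin L → ℕ}
    (S : Matrix ((i : Fin L) × Fin (d i)) ((i : Fin L) × Fin (d i)) ℝ) (l : Fin L) :
    Matrix (Below d l) (Below d l) ℝ :=
  Matrix.of fun p q => S p.val q.val

/-- The block row `S^{l,1:l−1}`. -/
def rowBlock {d : Fin L → ℕ}
    (S : Matrix ((i : Fin L) × Fin (d i)) ((i : Fin L) × Fin (d i)) ℝ) (l : Fin L) :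
    Matrix (Fin (d l)) (Below d l) ℝ :=
  Matrix.of fun i q => S ⟨l, i⟩ q.val

/-- The block column `S^{1:l−1,l}`. -/
def colBlock {d : Fin L → ℕ}
    (S : Matrix ((i : Fin L) × Fin (d i)) ((i : Fin L) × Fin (d i)) ℝ) (l : Fin L) :
    Matrix (Below d l) (Fin (d l)) ℝ :=
  Matrix.of fun p j => S p.val ⟨l, j⟩

/-- The diagonal block `S^{ll}`. -/
def diagBlock {d : Fin L → ℕ}
    (S : Matrix ((i : Fin L) × Fin (d i)) ((i : Fin L) × Fin (d i)) ℝ) (l : Fin L) :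
    Matrix (Fin (d l)) (Fin (d l)) ℝ :=
  Matrix.of fun i j => S ⟨l, i⟩ ⟨l, j⟩

/-- The subvector `x^{1:l−1}`. -/
def belowVec {d : Fin L → ℕ} (x : ((i : Fin L) × Fin (d i)) → ℝ) (l : Fin L) :
    Below d l → ℝ := fun p => x p.val

/-- The subvector `x^l`. -/
def blockVec {d : Fin L → ℕ} (x : ((i : Fin L) × Fin (d i)) → ℝ) (l : Fin L) :
    Fin (d l) → ℝ := fun i => x ⟨l, i⟩

/-- `μ̂^l = μ̃^l + S̃^{l,1:l−1}(S̃^{1:l−1,1:l−1})⁻¹(f^{1:l−1} − μ̃^{1:l−1})`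
(for `l = 1` the correction term is a sum over the empty index set). -/
def muHat {d : Fin L → ℕ} (μ : ((i : Fin L) × Fin (d i)) → ℝ)
    (S : Matrix ((i : Fin L) × Fin (d i)) ((i : Fin L) × Fin (d i)) ℝ)
    (f : ((i : Fin L) × Fin (d i)) → ℝ) (l : Fin L) : Fin (d l) → ℝ :=
  blockVec μ l + rowBlock S l *ᵥ ((prevBlock S l)⁻¹ *ᵥ (belowVec f l - belowVec μ l))

/-- `Σ̂^l = S̃^{ll} − S̃^{l,1:l−1}(S̃^{1:l−1,1:l−1})⁻¹S̃^{1:l−1,l}` (for `l = 1`,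
`Σ̂^1 = S̃^{11}`). -/
def sigmaHat {d : Fin L → ℕ}
    (S : Matrix ((i : Fin L) × Fin (d i)) ((i : Fin L) × Fin (d i)) ℝ) (l : Fin L) :
    Matrix (Fin (d l)) (Fin (d l)) ℝ :=
  diagBlock S l - rowBlock S l * (prevBlock S l)⁻¹ * colBlock S l

/-- The block `S_M^{ll'}` of the inducing-output covariance pairing layers `l` and `l'`. -/
def SMblock {m : Fin L → ℕ}
    (SM : Matrix ((i : Fin L) × Fin (m i)) ((i : Fin L) × Fin (m i)) ℝ) (l l' : Fin L) :
    Matrix (Fin (m l)) (Fin (m l')) ℝ :=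
  Matrix.of fun a b => SM ⟨l, a⟩ ⟨l', b⟩

/-- `μ̃^l := A^l(f^{l−1}) μ_M^l`, collected into one layered vector. -/
def muTilde (T : Fin (L + 1) → ℕ) (m : Fin L → ℕ)
    (A : ∀ l : Fin L, (Fin (T l.castSucc) → ℝ) → Matrix (Fin (T l.succ)) (Fin (m l)) ℝ)
    (μM : ((i : Fin L) × Fin (m i)) → ℝ) (f : ∀ l : Fin (L + 1), Fin (T l) → ℝ) :
    ((l : Fin L) × Fin (T l.succ)) → ℝ :=
  fun p => (A p.1 (f p.1.castSucc) *ᵥ fun a => μM ⟨p.1, a⟩) p.2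

/-- `S̃^{ll'} := δ_{ll'} B^l(f^{l−1}) + A^l(f^{l−1}) S_M^{ll'} A^{l'}(f^{l'−1})ᵀ`,
collected into one layered matrix. -/
def Stilde (T : Fin (L + 1) → ℕ) (m : Fin L → ℕ)
    (A : ∀ l : Fin L, (Fin (T l.castSucc) → ℝ) → Matrix (Fin (T l.succ)) (Fin (m l)) ℝ)
    (B : ∀ l : Fin L, (Fin (T l.castSucc) → ℝ) → Matrix (Fin (T l.succ)) (Fin (T l.succ)) ℝ)
    (SM : Matrix ((i : Fin L) × Fin (m i)) ((i : Fin L) × Fin (m i)) ℝ)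
    (f : ∀ l : Fin (L + 1), Fin (T l) → ℝ) :
    Matrix ((l : Fin L) × Fin (T l.succ)) ((l : Fin L) × Fin (T l.succ)) ℝ :=
  Matrix.of fun p q =>
    (if h : p.1 = q.1 then
        B p.1 (f p.1.castSucc) p.2 (Fin.cast (show T q.1.succ = T p.1.succ by rw [h]) q.2)
      else 0) +
      (A p.1 (f p.1.castSucc) * SMblock SM p.1 q.1 * (A q.1 (f q.1.castSucc))ᵀ) p.2 q.2


/-- Inducing-output indices lying in layers strictly after layer `l`. -/
abbrev AboveM (m : Fin L → ℕ) (l : Fin L) : Type :=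
  {k : (i : Fin L) × Fin (m i) // l < k.1}

/-- Inducing-output indices lying in layers up to (and including) layer `l`. -/
abbrev UptoM (m : Fin L → ℕ) (l : Fin L) : Type :=
  {k : (i : Fin L) × Fin (m i) // k.1 ≤ l}

/-- `D_{l−1} = blockdiag(A^1(f^0), …, A^{l−1}(f^{l−2}))`. -/
def Dmat (T : Fin (L + 1) → ℕ) (m : Fin L → ℕ)
    (A : ∀ l : Fin L, (Fin (T l.castSucc) → ℝ) → Matrix (Fin (T l.succ)) (Fin (m l)) ℝ)
    (f : ∀ l : Fin (L + 1), Fin (T l) → ℝ) (l : Fin L) :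
    Matrix (Below (fun i => T i.succ) l) (Below m l) ℝ :=
  Matrix.of fun p k =>
    if h : p.val.1 = k.val.1 then
      A p.val.1 (f p.val.1.castSucc) p.val.2
        (Fin.cast (show m k.val.1 = m p.val.1 by rw [h]) k.val.2)
    else 0

/-- `S_M^{l+1:L,1:l−1}`. -/
def SMab {m : Fin L → ℕ}
    (SM : Matrix ((i : Fin L) × Fin (m i)) ((i : Fin L) × Fin (m i)) ℝ) (l : Fin L) :
    Matrix (AboveM m l) (Below m l) ℝ :=
  Matrix.of fun a b => SM a.val b.val

/-- `S_M^{1:l−1,l+1:L}`. -/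
def SMba {m : Fin L → ℕ}
    (SM : Matrix ((i : Fin L) × Fin (m i)) ((i : Fin L) × Fin (m i)) ℝ) (l : Fin L) :
    Matrix (Below m l) (AboveM m l) ℝ :=
  Matrix.of fun b a => SM b.val a.val

/-- `S_M^{l+1:L,l+1:L}`. -/
def SMaa {m : Fin L → ℕ}
    (SM : Matrix ((i : Fin L) × Fin (m i)) ((i : Fin L) × Fin (m i)) ℝ) (l : Fin L) :
    Matrix (AboveM m l) (AboveM m l) ℝ :=
  Matrix.of fun a a' => SM a.val a'.val

/-- `S_M^{l,l+1:L}`. -/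
def SMla {m : Fin L → ℕ}
    (SM : Matrix ((i : Fin L) × Fin (m i)) ((i : Fin L) × Fin (m i)) ℝ) (l : Fin L) :
    Matrix (Fin (m l)) (AboveM m l) ℝ :=
  Matrix.of fun i a => SM ⟨l, i⟩ a.val

/-- `μ̂_M^{(l)} = μ_M^{l+1:L}
  + S_M^{l+1:L,1:l−1} D_{l−1}ᵀ (S̃^{1:l−1,1:l−1})⁻¹ (f^{1:l−1} − μ̃^{1:l−1})`. -/
def muHatM (T : Fin (L + 1) → ℕ) (m : Fin L → ℕ)
    (A : ∀ l : Fin L, (Fin (T l.castSucc) → ℝ) → Matrix (Fin (T l.succ)) (Fin (m l)) ℝ)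
    (B : ∀ l : Fin L, (Fin (T l.castSucc) → ℝ) → Matrix (Fin (T l.succ)) (Fin (T l.succ)) ℝ)
    (SM : Matrix ((i : Fin L) × Fin (m i)) ((i : Fin L) × Fin (m i)) ℝ)
    (μM : ((i : Fin L) × Fin (m i)) → ℝ)
    (f : ∀ l : Fin (L + 1), Fin (T l) → ℝ) (l : Fin L) : AboveM m l → ℝ :=
  (fun a => μM a.val) +
    (SMab SM l * (Dmat T m A f l)ᵀ) *ᵥ
      ((prevBlock (Stilde T m A B SM f) l)⁻¹ *ᵥ
        (belowVec (fun p => f p.1.succ p.2) l - belowVec (muTilde T m A μM f) l))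

/-- `Σ̂_M^{(l)} = S_M^{l+1:L,l+1:L}
  − S_M^{l+1:L,1:l−1} D_{l−1}ᵀ (S̃^{1:l−1,1:l−1})⁻¹ D_{l−1} S_M^{1:l−1,l+1:L}`. -/
def sigHatM (T : Fin (L + 1) → ℕ) (m : Fin L → ℕ)
    (A : ∀ l : Fin L, (Fin (T l.castSucc) → ℝ) → Matrix (Fin (T l.succ)) (Fin (m l)) ℝ)
    (B : ∀ l : Fin L, (Fin (T l.castSucc) → ℝ) → Matrix (Fin (T l.succ)) (Fin (T l.succ)) ℝ)
    (SM : Matrix ((i : Fin L) × Fin (m i)) ((i : Fin L) × Fin (m i)) ℝ)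
    (f : ∀ l : Fin (L + 1), Fin (T l) → ℝ) (l : Fin L) :
    Matrix (AboveM m l) (AboveM m l) ℝ :=
  SMaa SM l -
    SMab SM l * (Dmat T m A f l)ᵀ * (prevBlock (Stilde T m A B SM f) l)⁻¹ *
      Dmat T m A f l * SMba SM l

/-- `Σ̂_{nM}^{(l)} = A^l(f^{l−1}) S_M^{l,l+1:L}
  − S̃^{l,1:l−1} (S̃^{1:l−1,1:l−1})⁻¹ D_{l−1} S_M^{1:l−1,l+1:L}`. -/
def sigHatNM (T : Fin (L + 1) → ℕ) (m : Fin L → ℕ)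
    (A : ∀ l : Fin L, (Fin (T l.castSucc) → ℝ) → Matrix (Fin (T l.succ)) (Fin (m l)) ℝ)
    (B : ∀ l : Fin L, (Fin (T l.castSucc) → ℝ) → Matrix (Fin (T l.succ)) (Fin (T l.succ)) ℝ)
    (SM : Matrix ((i : Fin L) × Fin (m i)) ((i : Fin L) × Fin (m i)) ℝ)
    (f : ∀ l : Fin (L + 1), Fin (T l) → ℝ) (l : Fin L) :
    Matrix (Fin (T l.succ)) (AboveM m l) ℝ :=
  A l (f l.castSucc) * SMla SM l -
    rowBlock (Stilde T m A B SM f) l * (prevBlock (Stilde T m A B SM f) l)⁻¹ *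
      Dmat T m A f l * SMba SM l

/-- `Γ^l = [[Σ̂^l, Σ̂_{nM}^{(l)}], [(Σ̂_{nM}^{(l)})ᵀ, Σ̂_M^{(l)}]]`. -/
def Gam (T : Fin (L + 1) → ℕ) (m : Fin L → ℕ)
    (A : ∀ l : Fin L, (Fin (T l.castSucc) → ℝ) → Matrix (Fin (T l.succ)) (Fin (m l)) ℝ)
    (B : ∀ l : Fin L, (Fin (T l.castSucc) → ℝ) → Matrix (Fin (T l.succ)) (Fin (T l.succ)) ℝ)
    (SM : Matrix ((i : Fin L) × Fin (m i)) ((i : Fin L) × Fin (m i)) ℝ)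
    (f : ∀ l : Fin (L + 1), Fin (T l) → ℝ) (l : Fin L) :
    Matrix (Fin (T l.succ) ⊕ AboveM m l) (Fin (T l.succ) ⊕ AboveM m l) ℝ :=
  Matrix.fromBlocks (sigmaHat (Stilde T m A B SM f) l) (sigHatNM T m A B SM f l)
    (sigHatNM T m A B SM f l)ᵀ (sigHatM T m A B SM f l)

/-- Reassemble a full inducing-output vector from its part on layers `1, …, l` and its
part on layers `l+1, …, L`. -/
def combineInd (m : Fin L → ℕ) (l : Fin L) (x : UptoM m l → ℝ) (y : AboveM m l → ℝ) :
    ((i : Fin L) × Fin (m i)) → ℝ :=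
  fun k => if h : k.1 ≤ l then x ⟨k, h⟩ else y ⟨k, not_le.mp h⟩

/-!
For fixed arguments `f^{l−1}` of `A^l` and `B^l`, the product of `q(f_M)` with the conditional
densities is a Gaussian density in the joint vector of inducing outputs and layer outputs: the
outputs are a linear image of `f_M` plus independent noise. Its covariance `J` is positive definite
and its block over the layer outputs is `S̃`. Integrating out coordinates restricts the mean and `J`
to the remaining ones. Conditioning the remaining vector `(f^l, f_M^{l+1:L})` on `f^{1:l−1}` gives
the mean `(μ̂^l, μ̂_M^{(l)})` and the Schur complement `Γ^l`, and the chain rule over the layers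
factorises the marginal density of `f^{1:l−1}`.
-/

section Schur

variable {ι κ : Type*} [Fintype ι] [DecidableEq ι]

theorem dotProduct_inv_fromBlocks_mulVec_sumElim {R : Type*} [CommRing R] [Fintype κ]
    [DecidableEq κ] {P : Matrix ι ι R} {Q : Matrix ι κ R} {V : Matrix κ κ R} (hPsymm : P.IsSymm)
    (hP : IsUnit P) (hK : IsUnit (V - Qᵀ * P⁻¹ * Q)) (a : ι → R) (b : κ → R) :
    Sum.elim a b ⬝ᵥ ((fromBlocks P Q Qᵀ V)⁻¹ *ᵥ Sum.elim a b) =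
      a ⬝ᵥ (P⁻¹ *ᵥ a) +
        (b - Qᵀ *ᵥ (P⁻¹ *ᵥ a)) ⬝ᵥ
          ((V - Qᵀ * P⁻¹ * Q)⁻¹ *ᵥ (b - Qᵀ *ᵥ (P⁻¹ *ᵥ a))) := by
  let _ := hP.invertible
  let _ : Invertible (V - Qᵀ * ⅟P * Q) := by
    rw [invOf_eq_nonsing_inv]
    exact hK.invertible
  let _ := fromBlocks₁₁Invertible P Q Qᵀ V
  have hinv := invOf_fromBlocks₁₁_eq P Q Qᵀ V
  simp only [invOf_eq_nonsing_inv] at hinv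
  have hadj (w : κ → R) : a ⬝ᵥ (P⁻¹ *ᵥ (Q *ᵥ w)) = (Qᵀ *ᵥ (P⁻¹ *ᵥ a)) ⬝ᵥ w := by
    rw [dotProduct_mulVec, dotProduct_mulVec, ← mulVec_transpose, ← mulVec_transpose,
      transpose_nonsing_inv, hPsymm.eq]
  rw [hinv, fromBlocks_mulVec]
  simp only [Sum.elim_comp_inl, Sum.elim_comp_inr, sumElim_dotProduct_sumElim, add_mulVec,
    neg_mulVec, ← mulVec_mulVec, dotProduct_add, dotProduct_neg, hadj, mulVec_sub, dotProduct_sub,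
    sub_dotProduct]
  ring

theorem posDef_fromBlocks_iff_schur [Finite κ] {P : Matrix ι ι ℝ} (hP : P.PosDef)
    (Q : Matrix ι κ ℝ) (V : Matrix κ κ ℝ) :
    (fromBlocks P Q Qᵀ V).PosDef ↔ (V - Qᵀ * P⁻¹ * Q).PosDef := by
  classical
  let _ := Fintype.ofFinite κ
  let _ := hP.isUnit.invertible
  have hsemi := PosDef.fromBlocks₁₁ Q V hP
  have hunit := isUnit_fromBlocks_iff_of_invertible₁₁ (A := P) (B := Q) (C := Qᵀ) (D := V)
  rw [conjTranspose_eq_transpose_of_trivial] at hsemi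
  rw [invOf_eq_nonsing_inv] at hunit
  constructor
  · intro h
    exact (hsemi.1 h.posSemidef).posDef_iff_isUnit.2 (hunit.1 h.isUnit)
  · intro h
    exact (hsemi.2 h.posSemidef).posDef_iff_isUnit.2 (hunit.2 h.isUnit)

end Schur

theorem submatrix_sumElim {τ ι κ α : Type*} (S : Matrix τ τ α) (i : ι → τ) (j : κ → τ) :
    S.submatrix (Sum.elim i j) (Sum.elim i j) =
      fromBlocks (S.submatrix i i) (S.submatrix i j) (S.submatrix j i) (S.submatrix j j) := by
  ext (_ | _) (_ | _) <;> rfl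

theorem transpose_submatrix_of_isSymm {τ ι κ α : Type*} {S : Matrix τ τ α} (hS : S.IsSymm)
    (i : ι → τ) (j : κ → τ) : (S.submatrix i j)ᵀ = S.submatrix j i := by
  rw [transpose_submatrix, hS.eq]

section Conditional

variable {τ ι κ κ' : Type*} [Fintype ι] [DecidableEq ι]
  {S : Matrix τ τ ℝ} {i : ι → τ} {j : κ → τ}

/-- The mean of the coordinates `j` of a Gaussian vector with mean `μ` and covariance `S`,
conditionally on its coordinates `i` taking the value `x`. -/
def condMean (μ : τ → ℝ) (S : Matrix τ τ ℝ) (i : ι → τ) (j : κ → τ) (x : ι → ℝ) : κ → ℝ :=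
  μ ∘ j + S.submatrix j i *ᵥ ((S.submatrix i i)⁻¹ *ᵥ (x - μ ∘ i))

/-- The cross-covariance of the coordinates `j` and `k` of a Gaussian vector with covariance `S`,
conditionally on its coordinates `i`. -/
def condCov (S : Matrix τ τ ℝ) (i : ι → τ) (j : κ → τ) (k : κ' → τ) : Matrix κ κ' ℝ :=
  S.submatrix j k - S.submatrix j i * (S.submatrix i i)⁻¹ * S.submatrix i k

theorem condMean_sumElim (μ : τ → ℝ) (S : Matrix τ τ ℝ) (i : ι → τ) (j : κ → τ) (k : κ' → τ)
    (x : ι → ℝ) :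
    condMean μ S i (Sum.elim j k) x = Sum.elim (condMean μ S i j x) (condMean μ S i k x) := by
  ext (_ | _) <;> rfl

theorem condCov_sumElim (S : Matrix τ τ ℝ) (i : ι → τ) (j : κ → τ) (k : κ' → τ) :
    condCov S i (Sum.elim j k) (Sum.elim j k) =
      fromBlocks (condCov S i j j) (condCov S i j k) (condCov S i k j) (condCov S i k k) := by
  ext (_ | _) (_ | _) <;> rfl

theorem transpose_condCov (hS : S.IsSymm) (i : ι → τ) (j : κ → τ) (k : κ' → τ) :
    (condCov S i j k)ᵀ = condCov S i k j := by
  simp only [condCov, transpose_sub, transpose_mul, transpose_nonsing_inv,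
    transpose_submatrix_of_isSymm hS, Matrix.mul_assoc]

theorem posDef_condCov [Finite κ] (hS : S.PosDef) (hij : (Sum.elim i j).Injective) :
    (condCov S i j j).PosDef := by
  have hblocks := hS.submatrix hij
  have hT := transpose_submatrix_of_isSymm (isHermitian_iff_isSymm.1 hS.isHermitian) i j
  rw [submatrix_sumElim, ← hT] at hblocks
  rw [condCov, ← hT]
  exact (posDef_fromBlocks_iff_schur (hS.submatrix (hij.comp Sum.inl_injective)) _ _).1 hblocks

end Conditional

section Density

theorem integral_exp_neg_half_dotProduct {ι : Type*} [Fintype ι] :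
    ∫ z : ι → ℝ, exp (-(1 / 2) * (z ⬝ᵥ z)) = (2 * π) ^ ((Fintype.card ι : ℝ) / 2) := by
  have hprod (z : ι → ℝ) : exp (-(1 / 2) * (z ⬝ᵥ z)) = ∏ k, exp (-(1 / 2) * z k ^ 2) := by
    simp only [← exp_sum, ← Finset.mul_sum, dotProduct, sq]
  simp_rw [hprod]
  rw [integral_fintype_prod_volume_eq_pow (fun t : ℝ => exp (-(1 / 2) * t ^ 2)), integral_gaussian,
    sqrt_eq_rpow, ← rpow_natCast, ← rpow_mul (by positivity)]
  congr 1 <;> ring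

variable {ι κ τ : Type*} [Fintype ι] [DecidableEq ι] [Fintype κ] [DecidableEq κ]

theorem integral_comp_mulVec {M : Matrix ι ι ℝ} (hM : M.det ≠ 0) (g : (ι → ℝ) → ℝ) :
    ∫ x, g (M *ᵥ x) = |M.det|⁻¹ * ∫ z, g z := by
  have hemb : MeasurableEmbedding (toLin' M) := by
    refine (LinearMap.isClosedEmbedding_of_injective ?_).measurableEmbedding
    exact LinearMap.ker_eq_bot.2
      (mulVec_injective_iff_isUnit.2 ((isUnit_iff_isUnit_det M).2 hM.isUnit))
  calc ∫ x, g (M *ᵥ x) = ∫ z, g z ∂(volume.map (toLin' M)) := (hemb.integral_map g).symm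
    _ = |M.det|⁻¹ * ∫ z, g z := by
      rw [map_matrix_volume_pi_eq_smul_volume_pi hM, integral_smul_measure,
        ENNReal.toReal_ofReal (abs_nonneg _), abs_inv, smul_eq_mul]

open scoped MatrixOrder in
theorem integral_exp_neg_half_dotProduct_mulVec {P : Matrix ι ι ℝ} (hP : P.PosDef) :
    ∫ x : ι → ℝ, exp (-(1 / 2) * (x ⬝ᵥ (P *ᵥ x))) =
      (2 * π) ^ ((Fintype.card ι : ℝ) / 2) * P.det ^ (-(1 : ℝ) / 2) := by
  obtain ⟨M, hM⟩ := CStarAlgebra.nonneg_iff_eq_star_mul_self.1 hP.posSemidef.nonneg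
  rw [star_eq_conjTranspose, conjTranspose_eq_transpose_of_trivial] at hM
  have hdet : P.det = |M.det| ^ 2 := by
    rw [hM, det_mul, det_transpose, sq_abs, sq]
  have hMdet : M.det ≠ 0 := by
    intro h
    simpa [hdet, h] using hP.det_pos
  have hquad (x : ι → ℝ) : x ⬝ᵥ (P *ᵥ x) = (M *ᵥ x) ⬝ᵥ (M *ᵥ x) := by
    rw [hM, ← mulVec_mulVec, dotProduct_mulVec, vecMul_transpose]
  have hrpow : P.det ^ (-(1 : ℝ) / 2) = |M.det|⁻¹ := by
    rw [hdet, ← rpow_natCast, ← rpow_mul (abs_nonneg _)]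
    norm_num [rpow_neg_one]
  simp_rw [hquad]
  rw [integral_comp_mulVec hMdet (fun z => exp (-(1 / 2) * (z ⬝ᵥ z))),
    integral_exp_neg_half_dotProduct, hrpow, mul_comm]

theorem integral_gaussPDF (μ : ι → ℝ) {S : Matrix ι ι ℝ} (hS : S.PosDef) :
    ∫ x, gaussPDF μ S x = 1 := by
  have hpi : (2 * π) ^ (-(Fintype.card ι : ℝ) / 2) * (2 * π) ^ ((Fintype.card ι : ℝ) / 2) = 1 := by
    rw [← rpow_add (by positivity), neg_div, neg_add_cancel, rpow_zero]
  have hdet : S.det ^ (-(1 : ℝ) / 2) * S⁻¹.det ^ (-(1 : ℝ) / 2) = 1 := by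
    rw [← mul_rpow hS.det_pos.le hS.inv.det_pos.le, det_nonsing_inv, Ring.inverse_eq_inv',
      mul_inv_cancel₀ hS.det_pos.ne', one_rpow]
  simp only [gaussPDF]
  rw [integral_const_mul,
    integral_sub_right_eq_self (fun x : ι → ℝ => exp (-(1 / 2) * (x ⬝ᵥ (S⁻¹ *ᵥ x)))) μ,
    integral_exp_neg_half_dotProduct_mulVec hS.inv, mul_mul_mul_comm, hpi, hdet, one_mul]

/-- The marginal density of the coordinates `i` of a Gaussian vector with mean `μ` and
covariance `S`. -/
def gaussMarginal (μ : τ → ℝ) (S : Matrix τ τ ℝ) (i : ι → τ) (x : ι → ℝ) : ℝ :=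
  gaussPDF (μ ∘ i) (S.submatrix i i) x

theorem gaussMarginal_comp_equiv (μ : τ → ℝ) (S : Matrix τ τ ℝ) (i : κ → τ) (e : ι ≃ κ)
    (x : κ → ℝ) : gaussMarginal μ S (i ∘ e) (x ∘ e) = gaussMarginal μ S i x := by
  have hquad (a : κ → ℝ) (P : Matrix κ κ ℝ) :
      (a ∘ e) ⬝ᵥ (P.submatrix e e *ᵥ (a ∘ e)) = a ⬝ᵥ (P *ᵥ a) := by
    rw [submatrix_mulVec_equiv, comp_equiv_dotProduct_comp_equiv, Function.comp_assoc,
      e.self_comp_symm, Function.comp_id]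
  have hsub : x ∘ e - μ ∘ i ∘ e = (x - μ ∘ i) ∘ e := rfl
  have hmat : S.submatrix (i ∘ e) (i ∘ e) = (S.submatrix i i).submatrix e e := rfl
  rw [gaussMarginal, gaussMarginal, gaussPDF, gaussPDF, hsub, hmat, inv_submatrix_equiv, hquad,
    det_submatrix_equiv_self, Fintype.card_congr e]

theorem gaussMarginal_comp_eq_of_range_eq (μ : τ → ℝ) (S : Matrix τ τ ℝ) {i : ι → τ} {j : κ → τ}
    (hi : i.Injective) (hj : j.Injective) (h : Set.range i = Set.range j) (x : τ → ℝ) :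
    gaussMarginal μ S i (x ∘ i) = gaussMarginal μ S j (x ∘ j) := by
  let e : ι ≃ κ :=
    (Equiv.ofInjective i hi).trans ((Equiv.setCongr h).trans (Equiv.ofInjective j hj).symm)
  have hje : j ∘ e = i := by
    ext a
    exact Equiv.apply_ofInjective_symm hj ⟨i a, h ▸ Set.mem_range_self a⟩
  rw [← gaussMarginal_comp_equiv μ S j e, Function.comp_assoc, hje]

theorem gaussPDF_fromBlocks (μ : ι → ℝ) (ν : κ → ℝ) {P : Matrix ι ι ℝ} {Q : Matrix ι κ ℝ}
    {V : Matrix κ κ ℝ} (hP : P.PosDef) (hK : (V - Qᵀ * P⁻¹ * Q).PosDef) (x : ι → ℝ)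
    (y : κ → ℝ) :
    gaussPDF (Sum.elim μ ν) (fromBlocks P Q Qᵀ V) (Sum.elim x y) =
      gaussPDF μ P x * gaussPDF (ν + Qᵀ *ᵥ (P⁻¹ *ᵥ (x - μ))) (V - Qᵀ * P⁻¹ * Q) y := by
  have hdet : (fromBlocks P Q Qᵀ V).det = P.det * (V - Qᵀ * P⁻¹ * Q).det := by
    let _ := hP.isUnit.invertible
    rw [det_fromBlocks₁₁, invOf_eq_nonsing_inv]
  have hpi : (2 * π) ^ (-(Fintype.card (ι ⊕ κ) : ℝ) / 2) =
      (2 * π) ^ (-(Fintype.card ι : ℝ) / 2) * (2 * π) ^ (-(Fintype.card κ : ℝ) / 2) := by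
    rw [← rpow_add (by positivity), Fintype.card_sum]
    congr 1
    push_cast
    ring
  simp only [gaussPDF]
  rw [hdet, hpi, mul_rpow hP.det_pos.le hK.det_pos.le, ← Sum.elim_sub_sub,
    dotProduct_inv_fromBlocks_mulVec_sumElim (isHermitian_iff_isSymm.1 hP.isHermitian) hP.isUnit
      hK.isUnit, sub_sub, mul_add, exp_add]
  ring

variable (μ : τ → ℝ) {S : Matrix τ τ ℝ} {i : ι → τ} {j : κ → τ}

theorem gaussMarginal_sumElim (hS : S.PosDef) (hij : (Sum.elim i j).Injective) (x : ι → ℝ)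
    (y : κ → ℝ) :
    gaussMarginal μ S (Sum.elim i j) (Sum.elim x y) =
      gaussMarginal μ S i x * gaussPDF (condMean μ S i j x) (condCov S i j j) y := by
  have hi : (S.submatrix i i).PosDef := hS.submatrix (hij.comp Sum.inl_injective)
  have hcond := posDef_condCov hS hij
  have hT := transpose_submatrix_of_isSymm (isHermitian_iff_isSymm.1 hS.isHermitian) i j
  rw [condCov, ← hT] at hcond
  rw [gaussMarginal, submatrix_sumElim, Sum.comp_elim, ← hT, gaussPDF_fromBlocks _ _ hi hcond,
    gaussMarginal, condMean, condCov, hT]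

theorem integral_gaussMarginal_sumElim (hS : S.PosDef) (hij : (Sum.elim i j).Injective)
    (y : κ → ℝ) :
    ∫ x, gaussMarginal μ S (Sum.elim i j) (Sum.elim x y) = gaussMarginal μ S j y := by
  have hswap : (Sum.elim j i).Injective := by
    rw [← Sum.elim_swap]
    exact hij.comp (Equiv.sumComm κ ι).injective
  have hfactor (x : ι → ℝ) : gaussMarginal μ S (Sum.elim i j) (Sum.elim x y) =
      gaussMarginal μ S j y * gaussPDF (condMean μ S j i y) (condCov S j i i) x := by
    rw [← gaussMarginal_sumElim μ hS hswap, ← gaussMarginal_comp_equiv μ S _ (Equiv.sumComm ι κ)]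
    simp
  simp_rw [hfactor]
  rw [integral_const_mul, integral_gaussPDF _ (posDef_condCov hS hswap), mul_one]

end Density

section LinearGaussian

variable {ι κ : Type*} [Fintype ι] {S : Matrix ι ι ℝ} {B : Matrix κ κ ℝ}

/-- The joint covariance of `(u, C u + ε)`, where `u` and `ε` are independent random vectors with
covariances `S` and `B`. -/
def linearGaussianCov (S : Matrix ι ι ℝ) (C : Matrix κ ι ℝ) (B : Matrix κ κ ℝ) :
    Matrix (ι ⊕ κ) (ι ⊕ κ) ℝ :=
  fromBlocks S (S * Cᵀ) (C * S) (B + C * S * Cᵀ)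

theorem transpose_mul_transpose_of_isSymm (hS : S.IsSymm) (C : Matrix κ ι ℝ) :
    (S * Cᵀ)ᵀ = C * S := by
  rw [transpose_mul, transpose_transpose, hS.eq]

theorem schur_linearGaussianCov [DecidableEq ι] (hS : IsUnit S) (C : Matrix κ ι ℝ)
    (B : Matrix κ κ ℝ) :
    B + C * S * Cᵀ - C * S * S⁻¹ * (S * Cᵀ) = B := by
  rw [mul_nonsing_inv_cancel_right _ _ ((isUnit_iff_isUnit_det S).1 hS), ← Matrix.mul_assoc,
    add_sub_cancel_right]

theorem posDef_linearGaussianCov [Finite κ] (hS : S.PosDef) (hB : B.PosDef) (C : Matrix κ ι ℝ) :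
    (linearGaussianCov S C B).PosDef := by
  classical
  have hT := transpose_mul_transpose_of_isSymm (isHermitian_iff_isSymm.1 hS.isHermitian) C
  rw [linearGaussianCov, ← hT, posDef_fromBlocks_iff_schur hS, hT,
    schur_linearGaussianCov hS.isUnit]
  exact hB

theorem gaussPDF_mul_gaussPDF_mulVec [DecidableEq ι] [Fintype κ] [DecidableEq κ] (hS : S.PosDef)
    (hB : B.PosDef) (μ : ι → ℝ) (C : Matrix κ ι ℝ) (u : ι → ℝ) (y : κ → ℝ) :
    gaussPDF μ S u * gaussPDF (C *ᵥ u) B y =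
      gaussPDF (Sum.elim μ (C *ᵥ μ)) (linearGaussianCov S C B) (Sum.elim u y) := by
  have hT := transpose_mul_transpose_of_isSymm (isHermitian_iff_isSymm.1 hS.isHermitian) C
  have hschur : B + (S * Cᵀ)ᵀ * Cᵀ - (S * Cᵀ)ᵀ * S⁻¹ * (S * Cᵀ) = B := by
    rw [hT, schur_linearGaussianCov hS.isUnit]
  rw [linearGaussianCov, ← hT, gaussPDF_fromBlocks _ _ hS (hschur.symm ▸ hB), hschur, hT,
    mulVec_mulVec, mul_nonsing_inv_cancel_right _ _ ((isUnit_iff_isUnit_det S).1 hS.isUnit),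
    mulVec_sub, add_sub_cancel]

theorem gaussPDF_mul_gaussMarginal {o : Type*} [DecidableEq ι] [Fintype o] [DecidableEq o]
    {i : o → κ} (hS : S.PosDef) (hB : B.PosDef) (hi : i.Injective) (μ : ι → ℝ)
    (C : Matrix κ ι ℝ) (u : ι → ℝ) (y : o → ℝ) :
    gaussPDF μ S u * gaussMarginal (C *ᵥ u) B i y =
      gaussMarginal (Sum.elim μ (C *ᵥ μ)) (linearGaussianCov S C B) (Sum.map id i)
        (Sum.elim u y) := by
  have hcov : (linearGaussianCov S C B).submatrix (Sum.map id i) (Sum.map id i) =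
      linearGaussianCov S (C.submatrix i id) (B.submatrix i i) := by
    ext (_ | _) (_ | _) <;> rfl
  have hmean : Sum.elim μ (C *ᵥ μ) ∘ Sum.map id i = Sum.elim μ (C.submatrix i id *ᵥ μ) :=
    Sum.elim_comp_map
  rw [gaussMarginal, gaussMarginal, hcov, hmean]
  exact gaussPDF_mul_gaussPDF_mulVec hS (hB.submatrix hi) μ (C.submatrix i id) u y

end LinearGaussian

section Layers

variable {d : Fin L → ℕ} (μ : (i : Fin L) × Fin (d i) → ℝ)
  {S : Matrix ((i : Fin L) × Fin (d i)) ((i : Fin L) × Fin (d i)) ℝ}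

theorem mem_range_layer_iff {l : Fin L} {q : (i : Fin L) × Fin (d i)} :
    q ∈ Set.range (fun a => ⟨l, a⟩ : Fin (d l) → (i : Fin L) × Fin (d i)) ↔ q.1 = l := by
  constructor
  · rintro ⟨a, rfl⟩
    rfl
  · obtain ⟨k, a⟩ := q
    rintro rfl
    exact ⟨a, rfl⟩

theorem injective_sumElim_below_layer (l : Fin L) :
    (Sum.elim Subtype.val fun a => ⟨l, a⟩ :
      Below d l ⊕ Fin (d l) → (i : Fin L) × Fin (d i)).Injective :=
  Subtype.val_injective.sumElim (fun _ _ h => by simpa using h)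
    fun p _ h => p.2.ne (congrArg Sigma.fst h)

theorem gaussMarginal_upto_eq_mul (hS : S.PosDef) (x : (i : Fin L) × Fin (d i) → ℝ) (l : Fin L)
    {p : (i : Fin L) × Fin (d i) → Prop} [DecidablePred p] (hp : ∀ q, p q ↔ q.1 ≤ l) :
    gaussMarginal μ S (Subtype.val : {q // p q} → _) (fun q => x q) =
      gaussMarginal μ S Subtype.val (belowVec x l) *
        gaussPDF (muHat μ S x l) (sigmaHat S l) (blockVec x l) := by
  have hrange : Set.range (Subtype.val : {q // p q} → _) =
      Set.range (Sum.elim Subtype.val fun a => ⟨l, a⟩ : Below d l ⊕ Fin (d l) → _) := by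
    ext q
    simp only [Set.Sum.elim_range, Subtype.range_coe_subtype, Set.mem_union, Set.mem_ofPred_eq,
      mem_range_layer_iff, hp, le_iff_lt_or_eq]
  have hinj := injective_sumElim_below_layer (d := d) l
  calc gaussMarginal μ S (Subtype.val : {q // p q} → _) (x ∘ Subtype.val)
    _ = gaussMarginal μ S (Sum.elim Subtype.val fun a => ⟨l, a⟩)
          (Sum.elim (belowVec x l) (blockVec x l)) := by
      rw [gaussMarginal_comp_eq_of_range_eq μ S Subtype.val_injective hinj hrange, Sum.comp_elim]
      rfl
    _ = _ := gaussMarginal_sumElim μ hS hinj _ _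

theorem gaussMarginal_eq_prod_of_isLowerSet (hS : S.PosDef) (x : (i : Fin L) × Fin (d i) → ℝ)
    {s : Finset (Fin L)} (hs : IsLowerSet (s : Set (Fin L)))
    {p : (i : Fin L) × Fin (d i) → Prop} [DecidablePred p] (hp : ∀ q, p q ↔ q.1 ∈ s) :
    gaussMarginal μ S (Subtype.val : {q // p q} → _) (fun q => x q) =
      ∏ l ∈ s, gaussPDF (muHat μ S x l) (sigmaHat S l) (blockVec x l) := by
  induction s using Finset.induction_on_max generalizing p with
  | empty =>
    have : IsEmpty {q // p q} := ⟨fun q => Finset.notMem_empty _ ((hp q).1 q.2)⟩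
    simp [gaussMarginal, gaussPDF]
  | insert l s hlt ih =>
    have hmem (k : Fin L) : k ∈ s ↔ k < l := by
      refine ⟨hlt k, fun hk => ?_⟩
      exact Finset.mem_of_mem_insert_of_ne (hs hk.le (Finset.mem_insert_self l s)) hk.ne
    have hp_le (q : (i : Fin L) × Fin (d i)) : p q ↔ q.1 ≤ l := by
      rw [hp, Finset.mem_insert, hmem, le_iff_eq_or_lt]
    have hs' : IsLowerSet (s : Set (Fin L)) := fun a b hba ha =>
      (hmem b).2 (hba.trans_lt (hlt a ha))
    rw [gaussMarginal_upto_eq_mul μ hS x l hp_le, Finset.prod_insert fun h => (hlt l h).false,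
      mul_comm]
    congr 1
    exact ih hs' fun q => (hmem q.1).symm

end Layers

section BlockDiagonal

variable {o : Type*} [Fintype o] [DecidableEq o] {m' n' : o → Type*}

theorem blockDiagonal'_mulVec_apply {R : Type*} [NonUnitalNonAssocSemiring R]
    [∀ i, Fintype (n' i)] (M : ∀ i, Matrix (m' i) (n' i) R) (v : (i : o) × n' i → R) (i : o)
    (a : m' i) : (blockDiagonal' M *ᵥ v) ⟨i, a⟩ = (M i *ᵥ fun b => v ⟨i, b⟩) a := by
  simp only [mulVec, dotProduct]
  rw [Fintype.sum_sigma, Fintype.sum_eq_single i]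
  · simp only [blockDiagonal'_apply_eq]
  · intro j hj
    simp only [blockDiagonal'_apply_ne M a _ hj.symm, zero_mul, Finset.sum_const_zero]

theorem submatrix_blockDiagonal'_mul {R κ κ' : Type*} [NonUnitalNonAssocSemiring R]
    [∀ i, Fintype (n' i)] (M : ∀ i, Matrix (m' i) (n' i) R) (N : Matrix ((i : o) × n' i) κ R)
    (i : o) (k : κ' → κ) :
    (blockDiagonal' M * N).submatrix (Sigma.mk i) k = M i * N.submatrix (Sigma.mk i) k := by
  ext a b
  exact blockDiagonal'_mulVec_apply M (fun q => N q (k b)) i a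

theorem submatrix_mul_transpose_blockDiagonal' {R κ κ' : Type*} [NonUnitalCommSemiring R]
    [∀ i, Fintype (n' i)] (N : Matrix κ ((i : o) × n' i) R) (M : ∀ i, Matrix (m' i) (n' i) R)
    (k : κ' → κ) (i : o) :
    (N * (blockDiagonal' M)ᵀ).submatrix k (Sigma.mk i) =
      N.submatrix k (Sigma.mk i) * (M i)ᵀ := by
  have h := congrArg transpose (submatrix_blockDiagonal'_mul M Nᵀ i k)
  rwa [transpose_submatrix, transpose_mul, transpose_mul, transpose_submatrix,
    transpose_transpose] at h

theorem submatrix_val_mul_submatrix_val {ρ ι κ R : Type*} [Fintype ρ]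
    [NonUnitalNonAssocSemiring R] {p : ρ → Prop} [DecidablePred p] {ι' : Type*}
    (M : Matrix ι' ρ R) (N : Matrix ρ κ R) (i : ι → ι') (hM : ∀ a b, ¬p b → M (i a) b = 0)
    {κ' : Type*} (k : κ' → κ) :
    M.submatrix i (Subtype.val : {b // p b} → ρ) *
        (N.submatrix Subtype.val k : Matrix {b // p b} κ' R) =
      (M * N).submatrix i k := by
  ext a c
  simp only [mul_apply, submatrix_apply]
  have hzero : ∑ b : {b // ¬p b}, M (i a) b * N b (k c) = 0 :=
    Finset.sum_eq_zero fun b _ => by rw [hM a b b.2, zero_mul]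
  rw [← Fintype.sum_subtype_add_sum_subtype p, hzero, add_zero]

theorem posDef_blockDiagonal' {o : Type*} [Finite o] [DecidableEq o] {n' : o → Type*}
    [∀ i, Finite (n' i)] {M : ∀ i, Matrix (n' i) (n' i) ℝ}
    (hM : ∀ i, (M i).PosDef) : (blockDiagonal' M).PosDef := by
  let _ := Fintype.ofFinite o
  let _ := fun i => Fintype.ofFinite (n' i)
  refine PosDef.of_dotProduct_mulVec_pos ?_ fun x hx => ?_
  · exact isHermitian_blockDiagonal'_iff.2 fun i => (hM i).isHermitian
  have hsum : star x ⬝ᵥ (blockDiagonal' M *ᵥ x) =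
      ∑ i, star (fun a => x ⟨i, a⟩) ⬝ᵥ (M i *ᵥ fun a => x ⟨i, a⟩) := by
    simp only [dotProduct, Fintype.sum_sigma, blockDiagonal'_mulVec_apply, Pi.star_apply]
  obtain ⟨⟨i, a⟩, hia⟩ := Function.ne_iff.1 hx
  rw [hsum]
  exact Finset.sum_pos' (fun j _ => (hM j).posSemidef.dotProduct_mulVec_nonneg _)
    ⟨i, Finset.mem_univ i, (hM i).dotProduct_mulVec_pos fun h => hia (congrFun h a)⟩

theorem gaussMarginal_blockDiagonal' {d : Fin L → ℕ}
    {B : ∀ l, Matrix (Fin (d l)) (Fin (d l)) ℝ} (hB : ∀ l, (B l).PosDef)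
    (μ x : (i : Fin L) × Fin (d i) → ℝ) {s : Finset (Fin L)}
    (hs : IsLowerSet (s : Set (Fin L))) {p : (i : Fin L) × Fin (d i) → Prop} [DecidablePred p]
    (hp : ∀ q, p q ↔ q.1 ∈ s) :
    gaussMarginal μ (blockDiagonal' B) (Subtype.val : {q // p q} → _) (fun q => x q) =
      ∏ l ∈ s, gaussPDF (blockVec μ l) (B l) (blockVec x l) := by
  rw [gaussMarginal_eq_prod_of_isLowerSet μ (posDef_blockDiagonal' hB) x hs hp]
  refine Finset.prod_congr rfl fun l _ => ?_
  have hrow : rowBlock (blockDiagonal' B) l = 0 := by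
    ext a q
    exact blockDiagonal'_apply_ne B a q.1.2 q.2.ne'
  have hdiag : diagBlock (blockDiagonal' B) l = B l := by
    ext a b
    exact blockDiagonal'_apply_eq B l a b
  rw [muHat, sigmaHat, hrow, hdiag, zero_mulVec, add_zero, Matrix.zero_mul, Matrix.zero_mul,
    sub_zero]

end BlockDiagonal

section DeepGP

variable {T : Fin (L + 1) → ℕ} {m : Fin L → ℕ}
  (A : ∀ l : Fin L, (Fin (T l.castSucc) → ℝ) → Matrix (Fin (T l.succ)) (Fin (m l)) ℝ)
  (B : ∀ l : Fin L, (Fin (T l.castSucc) → ℝ) → Matrix (Fin (T l.succ)) (Fin (T l.succ)) ℝ)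
  (SM : Matrix ((i : Fin L) × Fin (m i)) ((i : Fin L) × Fin (m i)) ℝ)
  (μM : ((i : Fin L) × Fin (m i)) → ℝ) (f : ∀ l : Fin (L + 1), Fin (T l) → ℝ) (l : Fin L)

/-- The matrix `blockdiag(A^1(f^0), …, A^L(f^{L−1}))` taking the inducing outputs of all layers
to the conditional means of the layer outputs. -/
def stackedMap : Matrix ((l : Fin L) × Fin (T l.succ)) ((l : Fin L) × Fin (m l)) ℝ :=
  blockDiagonal' fun l => A l (f l.castSucc)

/-- The conditional covariance `blockdiag(B^1(f^0), …, B^L(f^{L−1}))` of the layer outputs given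
the inducing outputs. -/
def stackedNoise : Matrix ((l : Fin L) × Fin (T l.succ)) ((l : Fin L) × Fin (T l.succ)) ℝ :=
  blockDiagonal' fun l => B l (f l.castSucc)

/-- The coordinates of the joint vector of the inducing outputs (left summand) and the layer
outputs (right summand). -/
abbrev JointIndex (T : Fin (L + 1) → ℕ) (m : Fin L → ℕ) : Type :=
  ((i : Fin L) × Fin (m i)) ⊕ ((i : Fin L) × Fin (T i.succ))

/-- The joint mean of the inducing outputs and the layer outputs, for fixed arguments `f` of
`A` and `B`. -/
def jointMean : JointIndex T m → ℝ :=
  Sum.elim μM (stackedMap A f *ᵥ μM)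

/-- The joint covariance of the inducing outputs and the layer outputs, for fixed arguments `f` of
`A` and `B`. -/
def jointCov : Matrix (JointIndex T m) (JointIndex T m) ℝ :=
  linearGaussianCov SM (stackedMap A f) (stackedNoise B f)

/-- The coordinates of `f_M^{1:l}`, those integrated out at layer `l`. -/
def integratedCoord (T : Fin (L + 1) → ℕ) (m : Fin L → ℕ) (l : Fin L) :
    UptoM m l → JointIndex T m :=
  Sum.inl ∘ Subtype.val

/-- The coordinates of `f^{1:l−1}`, those conditioned on at layer `l`. -/
def pastCoord (T : Fin (L + 1) → ℕ) (m : Fin L → ℕ) (l : Fin L) :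
    Below (fun i => T i.succ) l → JointIndex T m :=
  Sum.inr ∘ Subtype.val

/-- The coordinates of `f^l`. -/
def presentCoord (T : Fin (L + 1) → ℕ) (m : Fin L → ℕ) (l : Fin L) :
    Fin (T l.succ) → JointIndex T m :=
  fun a => Sum.inr ⟨l, a⟩

/-- The coordinates of `f_M^{l+1:L}`. -/
def futureCoord (T : Fin (L + 1) → ℕ) (m : Fin L → ℕ) (l : Fin L) :
    AboveM m l → JointIndex T m :=
  Sum.inl ∘ Subtype.val

/-- The coordinates of `(f^l, f_M^{l+1:L})`, those of the joint Gaussian factor at layer `l`. -/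
abbrev remainingCoord (T : Fin (L + 1) → ℕ) (m : Fin L → ℕ) (l : Fin L) :
    Fin (T l.succ) ⊕ AboveM m l → JointIndex T m :=
  Sum.elim (presentCoord T m l) (futureCoord T m l)

theorem blockVec_stackedMap_mulVec (u : (i : Fin L) × Fin (m i) → ℝ) :
    blockVec (stackedMap A f *ᵥ u) l = A l (f l.castSucc) *ᵥ fun a => u ⟨l, a⟩ :=
  funext fun a => blockDiagonal'_mulVec_apply (fun l => A l (f l.castSucc)) u l a

theorem muTilde_eq_stackedMap_mulVec : muTilde T m A μM f = stackedMap A f *ᵥ μM :=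
  funext fun p => (congrFun (blockVec_stackedMap_mulVec A f p.1 μM) p.2).symm

theorem Stilde_eq_stackedNoise_add :
    Stilde T m A B SM f = stackedNoise B f + stackedMap A f * SM * (stackedMap A f)ᵀ := by
  ext ⟨k, a⟩ ⟨l, b⟩
  have hnoise : (if h : k = l then
      B k (f k.castSucc) a (Fin.cast (show T l.succ = T k.succ by rw [h]) b) else 0) =
        stackedNoise B f ⟨k, a⟩ ⟨l, b⟩ := by
    obtain rfl | hkl := eq_or_ne k l
    · simp [stackedNoise, blockDiagonal'_apply_eq]
    · simp [stackedNoise, blockDiagonal'_apply_ne, hkl]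
  have hmap : (stackedMap A f * SM * (stackedMap A f)ᵀ).submatrix (Sigma.mk k) (Sigma.mk l) =
      A k (f k.castSucc) * SMblock SM k l * (A l (f l.castSucc))ᵀ := by
    rw [stackedMap, submatrix_mul_transpose_blockDiagonal', submatrix_blockDiagonal'_mul]
    rfl
  exact congrArg₂ (· + ·) hnoise (congrFun₂ hmap a b).symm

theorem Dmat_eq_submatrix_stackedMap :
    Dmat T m A f l = (stackedMap A f).submatrix Subtype.val Subtype.val := by
  ext ⟨⟨k, a⟩, hk⟩ ⟨⟨k', b⟩, hk'⟩
  obtain rfl | hkk' := eq_or_ne k k'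
  · simp [Dmat, stackedMap, blockDiagonal'_apply_eq]
  · simp [Dmat, stackedMap, blockDiagonal'_apply_ne, hkk']

theorem Dmat_mul_SMba :
    Dmat T m A f l * SMba SM l = (stackedMap A f * SM).submatrix Subtype.val Subtype.val := by
  rw [Dmat_eq_submatrix_stackedMap]
  refine submatrix_val_mul_submatrix_val _ SM _ (fun a b hb => ?_) _
  exact blockDiagonal'_apply_ne _ _ _ fun h => hb (h ▸ a.2)

theorem SMab_mul_transpose_Dmat :
    SMab SM l * (Dmat T m A f l)ᵀ =
      (SM * (stackedMap A f)ᵀ).submatrix Subtype.val Subtype.val := by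
  have h := congrArg transpose (Dmat_mul_SMba A SMᵀ f l)
  rwa [transpose_mul, transpose_submatrix, transpose_mul, transpose_transpose] at h

theorem submatrix_inr_jointCov :
    (jointCov A B SM f).submatrix Sum.inr Sum.inr = Stilde T m A B SM f :=
  (Stilde_eq_stackedNoise_add A B SM f).symm

theorem posDef_stackedNoise (hB : ∀ l, (B l (f l.castSucc)).PosDef) :
    (stackedNoise B f).PosDef :=
  posDef_blockDiagonal' hB

theorem posDef_jointCov (hSM : SM.PosDef) (hB : ∀ l, (B l (f l.castSucc)).PosDef) :
    (jointCov A B SM f).PosDef :=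
  posDef_linearGaussianCov hSM (posDef_stackedNoise B f hB) _

theorem posDef_Stilde (hSM : SM.PosDef) (hB : ∀ l, (B l (f l.castSucc)).PosDef) :
    (Stilde T m A B SM f).PosDef := by
  rw [← submatrix_inr_jointCov]
  exact (posDef_jointCov A B SM f hSM hB).submatrix Sum.inr_injective

theorem sigmaHat_eq_condCov :
    sigmaHat (Stilde T m A B SM f) l =
      condCov (jointCov A B SM f) (pastCoord T m l) (presentCoord T m l) (presentCoord T m l) := by
  rw [← submatrix_inr_jointCov]
  rfl

theorem sigHatNM_eq_condCov :
    sigHatNM T m A B SM f l =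
      condCov (jointCov A B SM f) (pastCoord T m l) (presentCoord T m l) (futureCoord T m l) := by
  have hcross : A l (f l.castSucc) * SMla SM l =
      (jointCov A B SM f).submatrix (presentCoord T m l) (futureCoord T m l) :=
    (submatrix_blockDiagonal'_mul (fun l => A l (f l.castSucc)) SM l Subtype.val).symm
  rw [sigHatNM, hcross, Matrix.mul_assoc _ (Dmat T m A f l), Dmat_mul_SMba,
    ← submatrix_inr_jointCov]
  rfl

theorem sigHatM_eq_condCov :
    sigHatM T m A B SM f l =
      condCov (jointCov A B SM f) (pastCoord T m l) (futureCoord T m l) (futureCoord T m l) := by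
  rw [sigHatM, Matrix.mul_assoc _ (Dmat T m A f l), Dmat_mul_SMba, SMab_mul_transpose_Dmat,
    ← submatrix_inr_jointCov]
  rfl

theorem Gam_eq_condCov (hSM : SM.PosDef) (hB : ∀ l, (B l (f l.castSucc)).PosDef) :
    Gam T m A B SM f l =
      condCov (jointCov A B SM f) (pastCoord T m l)
        (remainingCoord T m l) (remainingCoord T m l) := by
  have hsymm := isHermitian_iff_isSymm.1 (posDef_jointCov A B SM f hSM hB).isHermitian
  rw [Gam, sigmaHat_eq_condCov, sigHatNM_eq_condCov, sigHatM_eq_condCov,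
    transpose_condCov hsymm, condCov_sumElim]

theorem sumElim_muHat_muHatM_eq_condMean :
    Sum.elim
        (muHat (muTilde T m A μM f) (Stilde T m A B SM f) (fun p => f p.1.succ p.2) l)
        (muHatM T m A B SM μM f l) =
      condMean (jointMean A μM f) (jointCov A B SM f) (pastCoord T m l)
        (remainingCoord T m l) (belowVec (fun p => f p.1.succ p.2) l) := by
  rw [condMean_sumElim, muHatM, SMab_mul_transpose_Dmat, muTilde_eq_stackedMap_mulVec,
    ← submatrix_inr_jointCov]
  rfl

theorem sumElim_combineInd_comp_integratedCoord (x : UptoM m l → ℝ) (y : AboveM m l → ℝ)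
    (z : (i : Fin L) × Fin (T i.succ) → ℝ) :
    Sum.elim (combineInd m l x y) z ∘ integratedCoord T m l = x :=
  funext fun k => dif_pos k.2

theorem sumElim_combineInd_comp_futureCoord (x : UptoM m l → ℝ) (y : AboveM m l → ℝ)
    (z : (i : Fin L) × Fin (T i.succ) → ℝ) :
    Sum.elim (combineInd m l x y) z ∘ futureCoord T m l = y :=
  funext fun k => dif_neg k.2.not_ge

theorem injective_sumElim_pastCoord_remainingCoord :
    (Sum.elim (pastCoord T m l) (remainingCoord T m l)).Injective := by
  have hpresent : (presentCoord T m l).Injective := fun a b h => by simpa [presentCoord] using h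
  refine (Sum.inr_injective.comp Subtype.val_injective).sumElim
    (hpresent.sumElim (Sum.inl_injective.comp Subtype.val_injective) fun _ _ => Sum.inr_ne_inl) ?_
  rintro p (a | k) h
  · exact p.2.ne (congrArg Sigma.fst (Sum.inr_injective h))
  · exact Sum.inr_ne_inl h

theorem injective_sumElim_integratedCoord :
    (Sum.elim (integratedCoord T m l)
      (Sum.elim (pastCoord T m l) (remainingCoord T m l))).Injective := by
  refine (Sum.inl_injective.comp Subtype.val_injective).sumElim
    (injective_sumElim_pastCoord_remainingCoord l) ?_
  rintro k (p | a | k') h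
  · exact Sum.inl_ne_inr h
  · exact Sum.inl_ne_inr h
  · exact (k.2.trans_lt k'.2).ne (congrArg Sigma.fst (Sum.inl_injective h))

theorem range_map_id_val_eq_range_sumElim :
    Set.range (Sum.map id Subtype.val :
        _ ⊕ {q : (i : Fin L) × Fin (T i.succ) // q.1 ≤ l} → JointIndex T m) =
      Set.range (Sum.elim (integratedCoord T m l)
        (Sum.elim (pastCoord T m l) (remainingCoord T m l))) := by
  ext (k | q)
  · have := le_or_gt k.1 l
    simpa [integratedCoord, pastCoord, presentCoord, futureCoord] using this
  · simp [integratedCoord, pastCoord, presentCoord, futureCoord, le_iff_lt_or_eq,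
      ← mem_range_layer_iff]

theorem gaussPDF_mul_prod_gaussPDF_eq_gaussMarginal (hSM : SM.PosDef)
    (hB : ∀ l, (B l (f l.castSucc)).PosDef) (x : UptoM m l → ℝ) (y : AboveM m l → ℝ)
    (z : (i : Fin L) × Fin (T i.succ) → ℝ) :
    (gaussPDF μM SM (combineInd m l x y) *
        ∏ l' ∈ Finset.univ.filter fun l' : Fin L => l' ≤ l,
          gaussPDF (A l' (f l'.castSucc) *ᵥ fun a => combineInd m l x y ⟨l', a⟩)
            (B l' (f l'.castSucc)) (blockVec z l')) =
      gaussMarginal (jointMean A μM f) (jointCov A B SM f)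
        (Sum.elim (integratedCoord T m l) (Sum.elim (pastCoord T m l) (remainingCoord T m l)))
        (Sum.elim x (Sum.elim (belowVec z l) (Sum.elim (blockVec z l) y))) := by
  let u := combineInd m l x y
  let val := (Subtype.val : {q : (i : Fin L) × Fin (T i.succ) // q.1 ≤ l} → _)
  have hlower : IsLowerSet ((Finset.univ.filter (· ≤ l) : Finset (Fin L)) : Set (Fin L)) := by
    rw [Finset.coe_filter_univ]
    exact isLowerSet_Iic l
  have hinj : (Sum.map id val : _ → JointIndex T m).Injective :=
    Function.injective_id.sumMap Subtype.val_injective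
  calc
    _ = gaussPDF μM SM u *
          gaussMarginal (stackedMap A f *ᵥ u) (stackedNoise B f) val (z ∘ val) := by
      simp_rw [← blockVec_stackedMap_mulVec]
      exact congrArg _ (gaussMarginal_blockDiagonal' hB _ z hlower (by simp)).symm
    _ = gaussMarginal (jointMean A μM f) (jointCov A B SM f) (Sum.map id val)
          (Sum.elim u z ∘ Sum.map id val) := by
      rw [gaussPDF_mul_gaussMarginal hSM (posDef_stackedNoise B f hB) Subtype.val_injective,
        Sum.elim_comp_map]
      rfl
    _ = _ := by
      rw [gaussMarginal_comp_eq_of_range_eq _ _ hinj (injective_sumElim_integratedCoord l)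
        (range_map_id_val_eq_range_sumElim l)]
      simp only [Sum.comp_elim, u, sumElim_combineInd_comp_integratedCoord,
        sumElim_combineInd_comp_futureCoord]
      rfl

theorem gaussMarginal_pastCoord (hSM : SM.PosDef) (hB : ∀ l, (B l (f l.castSucc)).PosDef)
    (z : (i : Fin L) × Fin (T i.succ) → ℝ) :
    gaussMarginal (jointMean A μM f) (jointCov A B SM f) (pastCoord T m l) (belowVec z l) =
      ∏ l' ∈ Finset.univ.filter fun l' : Fin L => l' < l,
        gaussPDF (muHat (muTilde T m A μM f) (Stilde T m A B SM f) z l')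
          (sigmaHat (Stilde T m A B SM f) l') (blockVec z l') := by
  have hlower : IsLowerSet ((Finset.univ.filter (· < l) : Finset (Fin L)) : Set (Fin L)) := by
    rw [Finset.coe_filter_univ]
    exact isLowerSet_Iio l
  calc
    _ = gaussMarginal (muTilde T m A μM f) (Stilde T m A B SM f) Subtype.val (belowVec z l) := by
      rw [muTilde_eq_stackedMap_mulVec, ← submatrix_inr_jointCov]
      rfl
    _ = _ := gaussMarginal_eq_prod_of_isLowerSet _ (posDef_Stilde A B SM f hSM hB) z hlower
      (by simp)

theorem deep_gp_layerwise_marginalisation_general (hSM : SM.PosDef)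
    (hB : ∀ l, (B l (f l.castSucc)).PosDef) :
    (Gam T m A B SM f l).PosDef ∧
    ∀ y : AboveM m l → ℝ,
      (∫ x : UptoM m l → ℝ,
          gaussPDF μM SM (combineInd m l x y) *
            ∏ l' ∈ Finset.univ.filter fun l' : Fin L => l' ≤ l,
              gaussPDF (A l' (f l'.castSucc) *ᵥ fun a => combineInd m l x y ⟨l', a⟩)
                (B l' (f l'.castSucc)) (f l'.succ)) =
        (∏ l' ∈ Finset.univ.filter fun l' : Fin L => l' < l,
            gaussPDF
              (muHat (muTilde T m A μM f) (Stilde T m A B SM f)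
                (fun p => f p.1.succ p.2) l')
              (sigmaHat (Stilde T m A B SM f) l') (f l'.succ)) *
          gaussPDF
            (Sum.elim
              (muHat (muTilde T m A μM f) (Stilde T m A B SM f)
                (fun p => f p.1.succ p.2) l)
              (muHatM T m A B SM μM f l))
            (Gam T m A B SM f l) (Sum.elim (f l.succ) y) := by
  have hJ := posDef_jointCov A B SM f hSM hB
  have hinj := injective_sumElim_pastCoord_remainingCoord (T := T) (m := m) l
  refine ⟨?_, fun y => ?_⟩
  · rw [Gam_eq_condCov A B SM f l hSM hB]
    exact posDef_condCov hJ hinj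
  let z : (i : Fin L) × Fin (T i.succ) → ℝ := fun p => f p.1.succ p.2
  calc
    _ = ∫ x, gaussMarginal (jointMean A μM f) (jointCov A B SM f)
          (Sum.elim (integratedCoord T m l) (Sum.elim (pastCoord T m l) (remainingCoord T m l)))
          (Sum.elim x (Sum.elim (belowVec z l) (Sum.elim (f l.succ) y))) :=
      integral_congr_ae <| .of_forall fun x =>
        gaussPDF_mul_prod_gaussPDF_eq_gaussMarginal A B SM μM f l hSM hB x y z
    _ = gaussMarginal (jointMean A μM f) (jointCov A B SM f)
          (Sum.elim (pastCoord T m l) (remainingCoord T m l))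
          (Sum.elim (belowVec z l) (Sum.elim (f l.succ) y)) :=
      integral_gaussMarginal_sumElim _ hJ (injective_sumElim_integratedCoord l) _
    _ = _ := by
      rw [gaussMarginal_sumElim _ hJ hinj, gaussMarginal_pastCoord A B SM μM f l hSM hB,
        sumElim_muHat_muHatM_eq_condMean, Gam_eq_condCov A B SM f l hSM hB]
      rfl

end DeepGP

/-- **Lemma 1 (layerwise marginalisation of the inducing outputs).**  For every layer `l`
the block matrix `Γ^l` is symmetric positive definite, and integrating the inducing
outputs of layers `1, …, l` out of `q(f_M) ∏_{l'≤l} p(f^{l'} | f_M^{l'}; f^{l'−1})`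
yields `[∏_{l'<l} N(f^{l'}; μ̂^{l'}, Σ̂^{l'})] ·
N((f^l, f_M^{l+1:L}); (μ̂^l, μ̂_M^{(l)}), Γ^l)`. -/
theorem deep_gp_layerwise_marginalisation (L : ℕ) (hL : 1 ≤ L)
    (T : Fin (L + 1) → ℕ) (m : Fin L → ℕ)
    (μM : ((i : Fin L) × Fin (m i)) → ℝ)
    (SM : Matrix ((i : Fin L) × Fin (m i)) ((i : Fin L) × Fin (m i)) ℝ)
    (hSM : SM.PosDef)
    (A : ∀ l : Fin L, (Fin (T l.castSucc) → ℝ) → Matrix (Fin (T l.succ)) (Fin (m l)) ℝ)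
    (B : ∀ l : Fin L, (Fin (T l.castSucc) → ℝ) → Matrix (Fin (T l.succ)) (Fin (T l.succ)) ℝ)
    (hAmeas : ∀ l i j, Measurable fun x => A l x i j)
    (hBmeas : ∀ l i j, Measurable fun x => B l x i j)
    (hBpd : ∀ l x, (B l x).PosDef)
    (hInv : ∀ (f : ∀ l : Fin (L + 1), Fin (T l) → ℝ) (l : Fin L),
      IsUnit (prevBlock (Stilde T m A B SM f) l).det) :
    ∀ f : ∀ l : Fin (L + 1), Fin (T l) → ℝ, ∀ l : Fin L,
      (Gam T m A B SM f l).PosDef ∧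
      ∀ y : AboveM m l → ℝ,
        (∫ x : UptoM m l → ℝ,
            gaussPDF μM SM (combineInd m l x y) *
              ∏ l' ∈ Finset.univ.filter fun l' : Fin L => l' ≤ l,
                gaussPDF (A l' (f l'.castSucc) *ᵥ fun a => combineInd m l x y ⟨l', a⟩)
                  (B l' (f l'.castSucc)) (f l'.succ)) =
          (∏ l' ∈ Finset.univ.filter fun l' : Fin L => l' < l,
              gaussPDF
                (muHat (muTilde T m A μM f) (Stilde T m A B SM f)
                  (fun p => f p.1.succ p.2) l')
                (sigmaHat (Stilde T m A B SM f) l') (f l'.succ)) *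
            gaussPDF
              (Sum.elim
                (muHat (muTilde T m A μM f) (Stilde T m A B SM f)
                  (fun p => f p.1.succ p.2) l)
                (muHatM T m A B SM μM f l))
              (Gam T m A B SM f l) (Sum.elim (f l.succ) y) :=
  fun f l => deep_gp_layerwise_marginalisation_general A B SM μM f l hSM fun l => hBpd l _

end
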